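/- arXiv:2605.25791 — 3 statements merged into one kernel-verified Lean document; each statement's English description precedes it below -/
import Mathlib

section
/- In the two-party binary DPF construction, for every level 0 ≤ l ≤ n and every input x = x_1…x_n ∈ {0,1}^n the following invariant holds: (i) if the prefix x_1…x_l equals α_1…α_l, then for b = 0,1 the evaluation states satisfy (σ_b^{(l)}(x), τ_b^{(l)}(x)) = (s_b^{(l)}, t_b^{(l)}), and moreover t_0^{(l)} ⊕ t_1^{(l)} = 1; (ii) if x_1…x_l ≠ α_1…α_l, then σ_0^{(l)}(x) = σ_1^{(l)}(x) and τ_0^{(l)}(x) = τ_1^{(l)}(x). This holds for every choice of the expansion function G, the function Convert, and the initial seeds. -/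
/-!
The invariant is proved by induction on the level, each step being one of three one-level facts.
If `x` is still on the path of `α` and its next bit agrees with `α`, evaluation performs the same
computation as key generation (`evalStep_keep`), and the correction bit on the kept side makes the
new control bits differ (`genStep_bits_ne`). If `x` leaves the path at this level, exactly one party
applies the correction word, which is the XOR of the two parties' values on the lost side, so both
parties end in the same state (`evalStep_lose`). Once the states coincide, they stay equal because
both parties apply the same deterministic step.
-/

namespace DPF

variable {lam : ℕ}

/-- One step of DPF key generation at a level with point-bit `a` (`a = true`
means `Keep = R`, `a = false` means `Keep = L`): given the current states
`(s₀, t₀, s₁, t₁)`, produce the new states together with the correction word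
`(s_CW, t_CW^L, t_CW^R)` of this level. -/
def genStep (G : BitVec lam → BitVec lam × Bool × BitVec lam × Bool) (a : Bool)
    (st : BitVec lam × Bool × BitVec lam × Bool) :
    (BitVec lam × Bool × BitVec lam × Bool) × (BitVec lam × Bool × Bool) :=
  let (s0, t0, s1, t1) := st
  let (s0L, t0L, s0R, t0R) := G s0
  let (s1L, t1L, s1R, t1R) := G s1
  -- Lose is the direction opposite to Keep
  let sCW : BitVec lam := if a then s0L ^^^ s1L else s0R ^^^ s1R
  let tCWL : Bool := (((t0L != t1L) != a) != true)
  let tCWR : Bool := ((t0R != t1R) != a)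
  let s0keep := if a then s0R else s0L
  let s1keep := if a then s1R else s1L
  let t0keep := if a then t0R else t0L
  let t1keep := if a then t1R else t1L
  let tCWkeep := if a then tCWR else tCWL
  let s0' := s0keep ^^^ (if t0 then sCW else 0#lam)
  let s1' := s1keep ^^^ (if t1 then sCW else 0#lam)
  let t0' := t0keep != (t0 && tCWkeep)
  let t1' := t1keep != (t1 && tCWkeep)
  ((s0', t0', s1', t1'), (sCW, tCWL, tCWR))

/-- Key-generation data after `l` levels for point `α` (1-indexed bits) and
initial seeds `s0init`, `s1init`: the first component is the state
`(s₀^{(l)}, t₀^{(l)}, s₁^{(l)}, t₁^{(l)})`, the second is the level-`l`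
correction word `CW^{(l)} = (s_CW^{(l)}, t_CW^{L,(l)}, t_CW^{R,(l)})`
(a dummy value at level `0`). -/
def gen (G : BitVec lam → BitVec lam × Bool × BitVec lam × Bool)
    (α : ℕ → Bool) (s0init s1init : BitVec lam) :
    ℕ → (BitVec lam × Bool × BitVec lam × Bool) × (BitVec lam × Bool × Bool)
  | 0 => ((s0init, false, s1init, true), (0#lam, false, false))
  | l + 1 => genStep G (α (l + 1)) (gen G α s0init s1init l).1

/-- One evaluation step with correction word `cw` and input bit `xb`. -/
def evalStep (G : BitVec lam → BitVec lam × Bool × BitVec lam × Bool)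
    (cw : BitVec lam × Bool × Bool) (xb : Bool) (st : BitVec lam × Bool) :
    BitVec lam × Bool :=
  let (σ, τ) := st
  let (σL, τL, σR, τR) := G σ
  let (sCW, tCWL, tCWR) := cw
  let σhatL := σL ^^^ (if τ then sCW else 0#lam)
  let σhatR := σR ^^^ (if τ then sCW else 0#lam)
  let τhatL := τL != (τ && tCWL)
  let τhatR := τR != (τ && tCWR)
  if xb then (σhatR, τhatR) else (σhatL, τhatL)

/-- Evaluation state `(σ_b^{(l)}(x), τ_b^{(l)}(x))` of party `b`
(`b = false` is party 0, `b = true` is party 1) after `l` levels on input `x`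
(1-indexed bits). -/
def evalSt (G : BitVec lam → BitVec lam × Bool × BitVec lam × Bool)
    (α : ℕ → Bool) (s0init s1init : BitVec lam) (b : Bool) (x : ℕ → Bool) :
    ℕ → BitVec lam × Bool
  | 0 => (if b then s1init else s0init, b)
  | l + 1 =>
      evalStep G (gen G α s0init s1init (l + 1)).2 (x (l + 1))
        (evalSt G α s0init s1init b x l)

end DPF

namespace DPF

/-- On the kept side, each party's evaluation step reproduces its key-generation state. -/
lemma evalStep_keep {lam : ℕ} (G : BitVec lam → BitVec lam × Bool × BitVec lam × Bool) (a : Bool)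
    (st : BitVec lam × Bool × BitVec lam × Bool) :
    evalStep G (genStep G a st).2 a (st.1, st.2.1) =
        ((genStep G a st).1.1, (genStep G a st).1.2.1) ∧
      evalStep G (genStep G a st).2 a (st.2.2.1, st.2.2.2) =
        ((genStep G a st).1.2.2.1, (genStep G a st).1.2.2.2) := by
  cases a <;> simp [evalStep, genStep]

/-- On the kept side the correction bit is `t₀ ⊕ t₁ ⊕ 1`, and exactly one party applies it. -/
lemma genStep_bits_ne {lam : ℕ} (G : BitVec lam → BitVec lam × Bool × BitVec lam × Bool) (a : Bool)
    (st : BitVec lam × Bool × BitVec lam × Bool) (h : (st.2.1 != st.2.2.2) = true) :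
    ((genStep G a st).1.2.1 != (genStep G a st).1.2.2.2) = true := by
  obtain ⟨s0, t0, s1, t1⟩ := st
  rcases h0 : G s0 with ⟨s0L, t0L, s0R, t0R⟩
  rcases h1 : G s1 with ⟨s1L, t1L, s1R, t1R⟩
  simp only [genStep, h0, h1] at h ⊢
  clear h0 h1
  revert a t0 t1 t0L t1L t0R t1R
  decide

/-- On the lost side the correction word is the XOR of the two parties' values, and exactly one
party applies it, so the two evaluation states become equal. -/
lemma evalStep_lose {lam : ℕ} (G : BitVec lam → BitVec lam × Bool × BitVec lam × Bool) (a xb : Bool)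
    (hx : xb ≠ a) (st : BitVec lam × Bool × BitVec lam × Bool)
    (h : (st.2.1 != st.2.2.2) = true) :
    evalStep G (genStep G a st).2 xb (st.1, st.2.1) =
      evalStep G (genStep G a st).2 xb (st.2.2.1, st.2.2.2) := by
  obtain ⟨s0, t0, s1, t1⟩ := st
  have hxor (u v : BitVec lam) : u ^^^ (u ^^^ v) = v := by
    rw [← BitVec.xor_assoc, BitVec.xor_self, BitVec.zero_xor]
  have hxor' (u v : BitVec lam) : v ^^^ (u ^^^ v) = u := by
    rw [BitVec.xor_comm u v, hxor]
  have hbit (p q : Bool) : (q != (p != q)) = p := by cases p <;> cases q <;> rfl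
  cases a <;> cases xb <;> cases t0 <;> cases t1 <;>
    first
      | exact absurd rfl hx
      | exact absurd h Bool.false_ne_true
      | simp [evalStep, genStep, hxor, hxor', hbit]

end DPF

/-- Invariant of the two-party binary DPF construction: for every level
`0 ≤ l ≤ n` and every input `x ∈ {0,1}^n`, (i) if the length-`l` prefix of `x`
equals that of `α`, then for each party `b` the evaluation state equals the
key-generation state `(s_b^{(l)}, t_b^{(l)})`, and `t₀^{(l)} ⊕ t₁^{(l)} = 1`;
(ii) otherwise, the two parties' evaluation states coincide. This holds for
every choice of the expansion function `G`, the function `Convert`, and the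
initial seeds. -/
theorem dpf_eval_invariant {lam n : ℕ} {Grp : Type*} [AddCommGroup Grp]
    (G : BitVec lam → BitVec lam × Bool × BitVec lam × Bool)
    (Convert : BitVec lam → Grp)
    (α : ℕ → Bool) (s0init s1init : BitVec lam)
    (l : ℕ) (hl : l ≤ n) (x : ℕ → Bool) :
    ((∀ j, 1 ≤ j → j ≤ l → x j = α j) →
      DPF.evalSt G α s0init s1init false x l =
        ((DPF.gen G α s0init s1init l).1.1, (DPF.gen G α s0init s1init l).1.2.1) ∧
      DPF.evalSt G α s0init s1init true x l =
        ((DPF.gen G α s0init s1init l).1.2.2.1, (DPF.gen G α s0init s1init l).1.2.2.2) ∧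
      (((DPF.gen G α s0init s1init l).1.2.1 != (DPF.gen G α s0init s1init l).1.2.2.2) = true)) ∧
    ((¬ ∀ j, 1 ≤ j → j ≤ l → x j = α j) →
      DPF.evalSt G α s0init s1init false x l = DPF.evalSt G α s0init s1init true x l) := by
  clear hl
  induction l with
  | zero => exact ⟨fun _ => ⟨rfl, rfl, rfl⟩, fun h => absurd (fun j _ _ => by omega) h⟩
  | succ l ih =>
    obtain ⟨ihEq, ihNe⟩ := ih
    simp only [DPF.evalSt, DPF.gen]
    by_cases hp : ∀ j, 1 ≤ j → j ≤ l → x j = α j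
    · obtain ⟨e0, e1, ht⟩ := ihEq hp
      rw [e0, e1]
      refine ⟨fun h => ?_, fun h => ?_⟩
      · rw [h (l + 1) (by omega) le_rfl]
        obtain ⟨k0, k1⟩ := DPF.evalStep_keep G (α (l + 1)) (DPF.gen G α s0init s1init l).1
        exact ⟨k0, k1, DPF.genStep_bits_ne G _ _ ht⟩
      · refine DPF.evalStep_lose G _ _ (fun hx => h fun j h1 hj => ?_) _ ht
        rcases Nat.le_succ_iff.mp hj with hj | rfl
        · exact hp j h1 hj
        · exact hx
    · refine ⟨fun h => absurd (fun j h1 hj => h j h1 (by omega)) hp, fun _ => ?_⟩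
      rw [ihNe hp]
end

section
/- In the two-party incremental DPF construction, for all choices of the expansion function G, the per-level functions Convert_l, the initial seeds, the point α ∈ {0,1}^n and the per-level payloads β_1 ∈ 𝔾_1, …, β_n ∈ 𝔾_n, and for every level 1 ≤ l ≤ n and every bit string x = x_1…x_l of length l, the reconstructed level-l output satisfies y_0^{(l)}(x) + y_1^{(l)}(x) = β_l if x = α_1…α_l (i.e., x is the length-l prefix of α), and y_0^{(l)}(x) + y_1^{(l)}(x) = 0 otherwise. -/
/-!
Compare the two parties' evaluation states after `l` levels. While `x` agrees with `α`, both
parties reproduce the states of key generation, and there the control bits differ, since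
`t_CW^{Keep}` is chosen to make `t₀ ⊕ t₁ = 1` (`gen_bits_ne`, `evalSt_on_path`). So exactly one
party adds `W_CW`, and its sign makes the outputs sum to `β_l`. At the first level where `x`
leaves `α`, exactly one party applies the correction words, which on the `Lose` side equal the XOR
of the two seeds and of the two bits. The two states thus become identical, and they stay identical
because evaluation is deterministic with common correction words (`evalSt_off_path`). Equal states
give outputs that cancel.
-/

namespace IDPF

variable {lam : ℕ} {Gp : ℕ → Type*} [∀ l, AddCommGroup (Gp l)]

/-- Key-generation data of the incremental DPF after `l` levels, for the point
`α` (1-indexed bits), per-level payloads `β`, per-level functions `Convert`,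
and initial seeds `s0init`, `s1init`. The first component is the state
`(s₀^{(l)}, t₀^{(l)}, s₁^{(l)}, t₁^{(l)})`, the second is the level-`l`
correction word `(s_CW^{(l)}, t_CW^{L,(l)}, t_CW^{R,(l)})`, and the third is
the level-`l` group correction word `W_CW^{(l)} ∈ 𝔾_l` (dummy values at
level `0`). -/
def gen (G : BitVec lam → BitVec lam × Bool × BitVec lam × Bool)
    (Convert : ∀ l : ℕ, BitVec lam → BitVec lam × Gp l)
    (α : ℕ → Bool) (β : ∀ l : ℕ, Gp l) (s0init s1init : BitVec lam) :
    (l : ℕ) → (BitVec lam × Bool × BitVec lam × Bool) × (BitVec lam × Bool × Bool) × Gp l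
  | 0 => ((s0init, false, s1init, true), (0#lam, false, false), 0)
  | l + 1 =>
      let st := (gen G Convert α β s0init s1init l).1
      let s0 := st.1
      let t0 := st.2.1
      let s1 := st.2.2.1
      let t1 := st.2.2.2
      let (s0L, t0L, s0R, t0R) := G s0
      let (s1L, t1L, s1R, t1R) := G s1
      let a := α (l + 1)  -- Keep = R if a, Keep = L otherwise; Lose is the other
      let sCW : BitVec lam := if a then s0L ^^^ s1L else s0R ^^^ s1R
      let tCWL : Bool := (((t0L != t1L) != a) != true)
      let tCWR : Bool := ((t0R != t1R) != a)
      let s0keep := if a then s0R else s0L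
      let s1keep := if a then s1R else s1L
      let t0keep := if a then t0R else t0L
      let t1keep := if a then t1R else t1L
      let tCWkeep := if a then tCWR else tCWL
      let t0' := t0keep != (t0 && tCWkeep)
      let t1' := t1keep != (t1 && tCWkeep)
      let s0tilde := s0keep ^^^ (if t0 then sCW else 0#lam)
      let s1tilde := s1keep ^^^ (if t1 then sCW else 0#lam)
      let c0 := Convert (l + 1) s0tilde
      let c1 := Convert (l + 1) s1tilde
      let w := β (l + 1) - c0.2 + c1.2
      let WCW : Gp (l + 1) := if t1' then -w else w
      ((c0.1, t0', c1.1, t1'), (sCW, tCWL, tCWR), WCW)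

/-- Evaluation data `(σ^{(j)}, τ^{(j)}, ω^{(j)})` of party `b` (`b = false` is
party 0, `b = true` is party 1) after `j` levels on input `x` (1-indexed
bits), using the correction words produced by key generation. -/
def evalSt (G : BitVec lam → BitVec lam × Bool × BitVec lam × Bool)
    (Convert : ∀ l : ℕ, BitVec lam → BitVec lam × Gp l)
    (α : ℕ → Bool) (β : ∀ l : ℕ, Gp l) (s0init s1init : BitVec lam)
    (b : Bool) (x : ℕ → Bool) :
    (j : ℕ) → BitVec lam × Bool × Gp j
  | 0 => (if b then s1init else s0init, b, 0)
  | j + 1 =>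
      let st := evalSt G Convert α β s0init s1init b x j
      let σ := st.1
      let τ := st.2.1
      let (σL, τL, σR, τR) := G σ
      let cw := (gen G Convert α β s0init s1init (j + 1)).2.1
      let sCW := cw.1
      let tCWL := cw.2.1
      let tCWR := cw.2.2
      let σhatL := σL ^^^ (if τ then sCW else 0#lam)
      let σhatR := σR ^^^ (if τ then sCW else 0#lam)
      let τhatL := τL != (τ && tCWL)
      let τhatR := τR != (τ && tCWR)
      let σtilde := if x (j + 1) then σhatR else σhatL
      let τ' := if x (j + 1) then τhatR else τhatL
      let c := Convert (j + 1) σtilde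
      (c.1, τ', c.2)

/-- The level-`l` output of party `b` on input `x`:
`y_b^{(l)}(x) = (−1)^b · (ω^{(l)} + τ^{(l)} • W_CW^{(l)})`. -/
def output (G : BitVec lam → BitVec lam × Bool × BitVec lam × Bool)
    (Convert : ∀ l : ℕ, BitVec lam → BitVec lam × Gp l)
    (α : ℕ → Bool) (β : ∀ l : ℕ, Gp l) (s0init s1init : BitVec lam)
    (b : Bool) (x : ℕ → Bool) (l : ℕ) : Gp l :=
  let st := evalSt G Convert α β s0init s1init b x l
  let v := st.2.2 + (if st.2.1 then (gen G Convert α β s0init s1init l).2.2 else 0)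
  if b then -v else v

end IDPF

namespace IDPF

/-- On the special path the two control bits always differ. -/
theorem gen_bits_ne {lam : ℕ} {Gp : ℕ → Type*} [∀ l, AddCommGroup (Gp l)]
    (G : BitVec lam → BitVec lam × Bool × BitVec lam × Bool)
    (Convert : ∀ l : ℕ, BitVec lam → BitVec lam × Gp l)
    (α : ℕ → Bool) (β : ∀ l : ℕ, Gp l) (s0init s1init : BitVec lam) (l : ℕ) :
    (gen G Convert α β s0init s1init l).1.2.2.2 =
      !(gen G Convert α β s0init s1init l).1.2.1 := by
  induction l with
  | zero => rfl
  | succ l ih =>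
    simp only [gen, ih]
    generalize (gen G Convert α β s0init s1init l).1.2.1 = t
    generalize (G (gen G Convert α β s0init s1init l).1.1) = g0
    generalize (G (gen G Convert α β s0init s1init l).1.2.2.1) = g1
    obtain ⟨-, a, -, b⟩ := g0
    obtain ⟨-, c, -, d⟩ := g1
    generalize α (l + 1) = e
    dsimp only
    clear ih
    revert t a b c d e
    decide

/-- While `x` agrees with `α`, evaluation reproduces the states of key generation. -/
theorem evalSt_on_path {lam : ℕ} {Gp : ℕ → Type*} [∀ l, AddCommGroup (Gp l)]
    (G : BitVec lam → BitVec lam × Bool × BitVec lam × Bool)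
    (Convert : ∀ l : ℕ, BitVec lam → BitVec lam × Gp l)
    (α : ℕ → Bool) (β : ∀ l : ℕ, Gp l) (s0init s1init : BitVec lam) (x : ℕ → Bool)
    (l : ℕ) (hx : ∀ j, 1 ≤ j → j ≤ l → x j = α j) :
    (evalSt G Convert α β s0init s1init false x l).1 =
        (gen G Convert α β s0init s1init l).1.1 ∧
      (evalSt G Convert α β s0init s1init false x l).2.1 =
        (gen G Convert α β s0init s1init l).1.2.1 ∧
      (evalSt G Convert α β s0init s1init true x l).1 =
        (gen G Convert α β s0init s1init l).1.2.2.1 ∧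
      (evalSt G Convert α β s0init s1init true x l).2.1 =
        (gen G Convert α β s0init s1init l).1.2.2.2 := by
  induction l with
  | zero => simp [evalSt, gen]
  | succ l ih =>
    obtain ⟨h1, h2, h3, h4⟩ := ih fun j h h' => hx j h (by omega)
    have hxl := hx (l + 1) (by omega) le_rfl
    simp only [evalSt, gen, h1, h2, h3, h4, hxl]
    cases α (l + 1) <;> simp

/-- Once `x` has left the path `α`, the two parties' evaluation data coincide. -/
theorem evalSt_off_path {lam : ℕ} {Gp : ℕ → Type*} [∀ l, AddCommGroup (Gp l)]
    (G : BitVec lam → BitVec lam × Bool × BitVec lam × Bool)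
    (Convert : ∀ l : ℕ, BitVec lam → BitVec lam × Gp l)
    (α : ℕ → Bool) (β : ∀ l : ℕ, Gp l) (s0init s1init : BitVec lam) (x : ℕ → Bool)
    (l : ℕ) (hx : ¬ ∀ j, 1 ≤ j → j ≤ l → x j = α j) :
    evalSt G Convert α β s0init s1init false x l =
      evalSt G Convert α β s0init s1init true x l := by
  induction l with
  | zero => exact absurd (fun j h h' => by omega) hx
  | succ l ih =>
    by_cases hp : ∀ j, 1 ≤ j → j ≤ l → x j = α j
    · have hne : x (l + 1) = !α (l + 1) := by
        refine Bool.eq_not.mpr ?_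
        intro h
        refine hx fun j h1 h2 => ?_
        rcases Nat.lt_or_eq_of_le h2 with h3 | rfl
        · exact hp j h1 (by omega)
        · exact h
      obtain ⟨h1, h2, h3, h4⟩ := evalSt_on_path G Convert α β s0init s1init x l hp
      have hb := gen_bits_ne G Convert α β s0init s1init l
      -- Both corrected `Lose` seeds are the seed of the party whose control bit is `0`.
      have hs : ∀ a b : BitVec lam, b ^^^ (a ^^^ b) = a := fun a b => by
        rw [BitVec.xor_comm a b, ← BitVec.xor_assoc, BitVec.xor_self, BitVec.zero_xor]
      have hs' : ∀ a b : BitVec lam, a ^^^ (a ^^^ b) = b := fun a b => by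
        rw [← BitVec.xor_assoc, BitVec.xor_self, BitVec.zero_xor]
      have ht : ∀ a b : Bool, (b != (a != b)) = a := by decide
      simp only [evalSt, gen, h1, h2, h3, h4, hb, hne]
      cases α (l + 1) <;> cases (gen G Convert α β s0init s1init l).1.2.1 <;> simp [hs, hs', ht]
    · simp only [evalSt, ih hp]

/-- The level-`l` group correction word, for `l ≥ 1`, expressed through the parties' evaluation
data along the special path. -/
theorem gen_WCW {lam : ℕ} {Gp : ℕ → Type*} [∀ l, AddCommGroup (Gp l)]
    (G : BitVec lam → BitVec lam × Bool × BitVec lam × Bool)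
    (Convert : ∀ l : ℕ, BitVec lam → BitVec lam × Gp l)
    (α : ℕ → Bool) (β : ∀ l : ℕ, Gp l) (s0init s1init : BitVec lam) (x : ℕ → Bool)
    (l : ℕ) (hl : 1 ≤ l) (hx : ∀ j, 1 ≤ j → j ≤ l → x j = α j) :
    (gen G Convert α β s0init s1init l).2.2 =
      if (gen G Convert α β s0init s1init l).1.2.2.2 then
        -(β l - (evalSt G Convert α β s0init s1init false x l).2.2 +
          (evalSt G Convert α β s0init s1init true x l).2.2)
      else
        β l - (evalSt G Convert α β s0init s1init false x l).2.2 +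
          (evalSt G Convert α β s0init s1init true x l).2.2 := by
  obtain ⟨l, rfl⟩ := Nat.exists_eq_add_of_le' hl
  obtain ⟨h1, h2, h3, h4⟩ :=
    evalSt_on_path G Convert α β s0init s1init x l fun j h h' => hx j h (by omega)
  have hxl := hx (l + 1) (by omega) le_rfl
  simp only [evalSt, gen, h1, h2, h3, h4, hxl]
  cases α (l + 1) <;> simp

end IDPF

/-- Correctness of the two-party incremental DPF construction: for all choices
of the expansion function `G`, the per-level functions `Convert_l`, the initial
seeds, the point `α ∈ {0,1}^n` and the per-level payloads `β_l ∈ 𝔾_l`, and for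
every level `1 ≤ l ≤ n` and every bit string `x` of length `l`, the
reconstructed level-`l` output satisfies `y₀^{(l)}(x) + y₁^{(l)}(x) = β_l` if
`x` is the length-`l` prefix of `α`, and `0` otherwise. -/
theorem incremental_dpf_correctness {lam n : ℕ} {Gp : ℕ → Type*}
    [∀ l, AddCommGroup (Gp l)]
    (G : BitVec lam → BitVec lam × Bool × BitVec lam × Bool)
    (Convert : ∀ l : ℕ, BitVec lam → BitVec lam × Gp l)
    (α : ℕ → Bool) (β : ∀ l : ℕ, Gp l) (s0init s1init : BitVec lam)
    (l : ℕ) (hl1 : 1 ≤ l) (hl2 : l ≤ n) (x : ℕ → Bool) :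
    ((∀ j, 1 ≤ j → j ≤ l → x j = α j) →
      IDPF.output G Convert α β s0init s1init false x l +
        IDPF.output G Convert α β s0init s1init true x l = β l) ∧
    ((¬ ∀ j, 1 ≤ j → j ≤ l → x j = α j) →
      IDPF.output G Convert α β s0init s1init false x l +
        IDPF.output G Convert α β s0init s1init true x l = 0) := by
  refine ⟨fun hx => ?_, fun hx => ?_⟩
  · obtain ⟨-, h2, -, h4⟩ := IDPF.evalSt_on_path G Convert α β s0init s1init x l hx
    have hb := IDPF.gen_bits_ne G Convert α β s0init s1init l
    have hW := IDPF.gen_WCW G Convert α β s0init s1init x l hl1 hx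
    simp only [IDPF.output, h2, h4, hW, hb]
    cases (IDPF.gen G Convert α β s0init s1init l).1.2.1 <;> simp <;> abel
  · simp [IDPF.output, IDPF.evalSt_off_path G Convert α β s0init s1init x l hx]
end

section
/- Height of the median-split KD-tree: define H : ℕ → ℕ by H(0) = 0 and, for m ≥ 1, H(m) = 1 + max( H(⌊m/2⌋), H(m − 1 − ⌊m/2⌋) ). Then for every m ≥ 1, H(m) = ⌊log₂ m⌋ + 1 (with ⌊log₂ m⌋ the base-2 natural-number logarithm); in particular the KD-tree built on m points by median splitting is balanced with height exactly ⌊log₂ m⌋ + 1. -/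
/-!
The left part of a median split has `m / 2` points and the right part at most as many. Since
`Nat.log 2` is monotone, strong induction shows that the left subtree is at least as high as the
right one, so the recursion becomes `H m = 1 + H (m / 2)`, which for `m ≥ 2` is the recursion of
`Nat.log 2 m + 1`.
-/

/-- Height of the median-split KD-tree: if `H 0 = 0` and, for every `m ≥ 1`,
`H m = 1 + max (H ⌊m/2⌋) (H (m − 1 − ⌊m/2⌋))` (the recursion of the KD-tree
built by median splitting), then for every `m ≥ 1` we have
`H m = ⌊log₂ m⌋ + 1`: the median-split KD-tree on `m` points is balanced with
height exactly `⌊log₂ m⌋ + 1`. -/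
theorem kdtree_height_eq_log (H : ℕ → ℕ) (h0 : H 0 = 0)
    (hrec : ∀ m : ℕ, 1 ≤ m → H m = 1 + max (H (m / 2)) (H (m - 1 - m / 2))) :
    ∀ m : ℕ, 1 ≤ m → H m = Nat.log 2 m + 1 := by
  intro m
  induction m using Nat.strong_induction_on with
  | _ m ih =>
    intro hm
    rcases Nat.lt_or_ge m 2 with h | h
    · obtain rfl : m = 1 := by omega
      simp [hrec 1 le_rfl, h0]
    · have hlog : Nat.log 2 m = Nat.log 2 (m / 2) + 1 :=
        Nat.log_of_one_lt_of_le one_lt_two h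
      have hleft : H (m / 2) = Nat.log 2 (m / 2) + 1 := ih _ (by omega) (by omega)
      -- The right part has at most `m / 2` points, so the left subtree attains the maximum.
      have hright : H (m - 1 - m / 2) ≤ H (m / 2) := by
        rcases Nat.eq_zero_or_pos (m - 1 - m / 2) with hz | hp
        · simp [hz, h0]
        · rw [hleft, ih _ (by omega) hp]
          exact Nat.succ_le_succ (Nat.log_mono_right (by omega))
      rw [hrec m hm, max_eq_left hright, hleft, hlog]
      omega
end
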